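/- (Laplace principle / vanishing viscosity limit) For every x ∈ ℝⁿ and t > 0, lim_{ε→0⁺} −ε ln( (2πtε)^{−n/2} ∫_{ℝⁿ} exp(−(‖x−y‖²/(2t) + J(y))/ε) dy ) = inf_{y ∈ ℝⁿ} { ‖x−y‖²/(2t) + J(y) }; that is, S_ε(x,t) → S₀(x,t) as ε → 0⁺. -/

import Mathlib

open scoped Topology
open Filter MeasureTheory

/-- The integrand `exp(−(‖x−y‖²/(2t) + J(y))/ε)`, with the convention `exp(−∞) = 0`. -/
noncomputable def heatIntegrand (n : ℕ) (J : EuclideanSpace ℝ (Fin n) → EReal)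
    (x : EuclideanSpace ℝ (Fin n)) (t ε : ℝ) (y : EuclideanSpace ℝ (Fin n)) : ℝ :=
  if J y = ⊤ then 0 else Real.exp (-((‖x - y‖ ^ 2 / (2 * t) + (J y).toReal) / ε))

/-- `S_ε(x,t) = −ε ln( (2πtε)^{−n/2} ∫ exp(−(‖x−y‖²/(2t) + J(y))/ε) dy )`. -/
noncomputable def viscSol (n : ℕ) (J : EuclideanSpace ℝ (Fin n) → EReal)
    (x : EuclideanSpace ℝ (Fin n)) (t ε : ℝ) : ℝ :=
  -ε * Real.log ((2 * Real.pi * t * ε) ^ (-(n : ℝ) / 2) * ∫ y, heatIntegrand n J x t ε y)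

/-!
With `ε = 1 / p`, the quantity `-ε log ∫ exp (-F / ε)` is `-log ‖exp (-F)‖_p`, so the Laplace
principle is the convergence of the `L^p` norms to the `L^∞` norm: the limit is the essential
infimum of `F`. Here `F y = ‖x - y‖² / (2t) + J y` is convex and its domain has nonempty interior,
hence every nonempty set `{F < a}` contains a nonempty open set and the essential infimum is the
infimum. Convexity also bounds `J` from below by an affine function of the norm, so that a Gaussian
dominates `exp (-F / ε)`, and the prefactor contributes `(n / 2) ε log (2πtε) → 0`.
-/

open scoped ENNReal

section LpNorm

variable {α E : Type*} [MeasurableSpace α] {μ : Measure α} [ENorm E] {f : α → E}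

lemma continuous_ennreal_const_rpow {a : ℝ≥0∞} (ha₀ : a ≠ 0) (ha : a ≠ ∞) :
    Continuous fun s : ℝ => a ^ s := by
  simp_rw [ENNReal.rpow_eq_exp_mul_log, ENNReal.log_pos_real ha₀ ha, ← EReal.coe_mul]
  exact ENNReal.continuous_exp.comp (continuous_coe_real_ereal.comp (continuous_mul_const _))

lemma tendsto_ennreal_const_rpow_div {a : ℝ≥0∞} (ha₀ : a ≠ 0) (ha : a ≠ ∞) (q : ℝ) :
    Tendsto (fun p : ℝ => a ^ (q / p)) atTop (𝓝 1) := by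
  have hpow := (continuous_ennreal_const_rpow ha₀ ha).tendsto 0
  rw [ENNReal.rpow_zero] at hpow
  exact hpow.comp (tendsto_id.const_div_atTop q)

lemma mul_measure_lt_enorm_rpow_le_eLpNorm' (hf : AEMeasurable (fun x => ‖f x‖ₑ) μ) (c : ℝ≥0∞)
    {p : ℝ} (hp : 0 < p) : c * μ {x | c < ‖f x‖ₑ} ^ (1 / p) ≤ eLpNorm' f p μ := by
  have hmarkov : c ^ p * μ {x | c < ‖f x‖ₑ} ≤ ∫⁻ x, ‖f x‖ₑ ^ p ∂μ :=
    calc c ^ p * μ {x | c < ‖f x‖ₑ}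
        ≤ c ^ p * μ {x | c ^ p ≤ ‖f x‖ₑ ^ p} := by
          gcongr with x
          exact fun hx => ENNReal.rpow_le_rpow hx.le hp.le
      _ ≤ ∫⁻ x, ‖f x‖ₑ ^ p ∂μ := mul_meas_ge_le_lintegral₀ (hf.pow_const p) _
  calc c * μ {x | c < ‖f x‖ₑ} ^ (1 / p)
      = (c ^ p * μ {x | c < ‖f x‖ₑ}) ^ (1 / p) := by
        rw [ENNReal.mul_rpow_of_nonneg _ _ (by positivity), one_div, ENNReal.rpow_rpow_inv hp.ne']
    _ ≤ eLpNorm' f p μ := by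
        rw [eLpNorm'_eq_lintegral_enorm]
        gcongr

lemma eLpNorm'_le_rpow_mul_eLpNorm'_rpow_of_ae_enorm_le (hf : AEMeasurable (fun x => ‖f x‖ₑ) μ)
    {c : ℝ≥0∞} (hc : ∀ᵐ x ∂μ, ‖f x‖ₑ ≤ c) {p q : ℝ} (hq : 0 < q) (hqp : q ≤ p) :
    eLpNorm' f p μ ≤ c ^ (1 - q / p) * eLpNorm' f q μ ^ (q / p) := by
  have hp : 0 < p := hq.trans_le hqp
  have hint : ∫⁻ x, ‖f x‖ₑ ^ p ∂μ ≤ c ^ (p - q) * ∫⁻ x, ‖f x‖ₑ ^ q ∂μ := by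
    rw [← lintegral_const_mul'' _ (hf.pow_const q)]
    refine lintegral_mono_ae (hc.mono fun x hx => ?_)
    calc ‖f x‖ₑ ^ p = ‖f x‖ₑ ^ (p - q) * ‖f x‖ₑ ^ q := by
          rw [← ENNReal.rpow_add_of_nonneg _ _ (sub_nonneg.2 hqp) hq.le, sub_add_cancel]
      _ ≤ c ^ (p - q) * ‖f x‖ₑ ^ q := by
          gcongr
  calc eLpNorm' f p μ
      ≤ (c ^ (p - q) * ∫⁻ x, ‖f x‖ₑ ^ q ∂μ) ^ (1 / p) := by
        rw [eLpNorm'_eq_lintegral_enorm]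
        gcongr
    _ = c ^ (1 - q / p) * eLpNorm' f q μ ^ (q / p) := by
        rw [ENNReal.mul_rpow_of_nonneg _ _ (by positivity), ← ENNReal.rpow_mul,
          eLpNorm'_eq_lintegral_enorm, ← ENNReal.rpow_mul]
        congr 2 <;> field_simp

lemma eventually_lt_eLpNorm'_of_lt_eLpNormEssSup (hf : AEMeasurable (fun x => ‖f x‖ₑ) μ)
    {a : ℝ≥0∞} (ha : a < eLpNormEssSup f μ) : ∀ᶠ p in atTop, a < eLpNorm' f p μ := by
  obtain ⟨c, hac, hc⟩ := exists_between ha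
  have hpos : μ {x | c < ‖f x‖ₑ} ≠ 0 :=
    frequently_ae_iff.1 (frequently_lt_of_lt_limsup (by isBoundedDefault) hc)
  -- Truncating at `1` keeps the base of the power finite when `μ` is infinite.
  have hlim : Tendsto (fun p : ℝ => c * min (μ {x | c < ‖f x‖ₑ}) 1 ^ (1 / p)) atTop (𝓝 c) := by
    have hroot := tendsto_ennreal_const_rpow_div (a := min (μ {x | c < ‖f x‖ₑ}) 1)
      (by simp [hpos]) (by simp) 1
    simpa using ENNReal.Tendsto.const_mul hroot (.inl one_ne_zero)
  filter_upwards [hlim.eventually_const_lt hac, eventually_gt_atTop 0] with p hap hp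
  refine (hap.trans_le ?_).trans_le (mul_measure_lt_enorm_rpow_le_eLpNorm' hf c hp)
  gcongr
  exact min_le_left _ _

lemma eventually_eLpNorm'_lt_of_eLpNormEssSup_lt (hf : AEMeasurable (fun x => ‖f x‖ₑ) μ)
    {q : ℝ} (hq : 0 < q) (hfq : eLpNorm' f q μ ≠ ∞) {b : ℝ≥0∞} (hb : eLpNormEssSup f μ < b) :
    ∀ᶠ p in atTop, eLpNorm' f p μ < b := by
  obtain ⟨c, hc, hcb⟩ := exists_between hb
  have hc₀ : c ≠ 0 := (zero_le.trans_lt hc).ne'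
  have hc_top : c ≠ ∞ := (hcb.trans_le le_top).ne
  -- Truncating at `1` keeps the base of the power nonzero when `f` vanishes almost everywhere.
  have hlim : Tendsto (fun p : ℝ => c ^ (1 - q / p) * max (eLpNorm' f q μ) 1 ^ (q / p))
      atTop (𝓝 c) := by
    have hroot := tendsto_ennreal_const_rpow_div (a := max (eLpNorm' f q μ) 1)
      (by simp) (by simp [hfq]) q
    have hexp : Tendsto (fun p : ℝ => 1 - q / p) atTop (𝓝 1) := by
      simpa using (tendsto_id.const_div_atTop q).const_sub 1
    have hpow := ((continuous_ennreal_const_rpow hc₀ hc_top).tendsto 1).comp hexp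
    simpa using ENNReal.Tendsto.mul hpow (.inr (by simp)) hroot (.inl one_ne_zero)
  filter_upwards [hlim.eventually_lt_const hcb, eventually_ge_atTop q] with p hpb hqp
  refine (eLpNorm'_le_rpow_mul_eLpNorm'_rpow_of_ae_enorm_le hf
    ((ae_lt_of_essSup_lt hc).mono fun _ => le_of_lt) hq hqp).trans_lt (hpb.trans_le' ?_)
  have : 0 ≤ q / p := div_nonneg hq.le (hq.le.trans hqp)
  gcongr
  exact le_max_left _ _

theorem tendsto_eLpNorm'_atTop_eLpNormEssSup (hf : AEMeasurable (fun x => ‖f x‖ₑ) μ)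
    {q : ℝ} (hq : 0 < q) (hfq : eLpNorm' f q μ ≠ ∞) :
    Tendsto (fun p => eLpNorm' f p μ) atTop (𝓝 (eLpNormEssSup f μ)) :=
  tendsto_order.2 ⟨fun _ => eventually_lt_eLpNorm'_of_lt_eLpNormEssSup hf,
    fun _ => eventually_eLpNorm'_lt_of_eLpNormEssSup_lt hf hq hfq⟩

end LpNorm

section LaplacePrinciple

variable {α : Type*} [MeasurableSpace α] {μ : Measure α} {F : α → EReal}

lemma essSup_exp_neg_eq_exp_neg_essInf : essSup (fun x => (-F x).exp) μ = (-essInf F μ).exp := by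
  have hneg : -essInf F μ = essSup (fun x => -F x) μ := EReal.negOrderIso.essInf_apply F μ
  rw [hneg]
  exact (EReal.expOrderIso.essSup_apply (fun x => -F x) μ).symm

lemma ereal_exp_div_coe (z : EReal) (ε : ℝ) : (z / ε).exp = z.exp ^ ε⁻¹ := by
  rw [EReal.div_eq_inv_mul, ← EReal.coe_inv, mul_comm, EReal.exp_mul]

lemma aemeasurable_exp_neg_div (hF : AEMeasurable F μ) (ε : ℝ) :
    AEMeasurable (fun x => (-F x / ε).exp) μ := by
  simp_rw [ereal_exp_div_coe]
  exact (EReal.measurable_exp.comp_aemeasurable hF.neg).pow_const _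

lemma lintegral_exp_neg_div_ne_zero (hF : AEMeasurable F μ) {ε : ℝ} (hε : 0 < ε)
    (hinf : essInf F μ ≠ ⊤) : ∫⁻ x, (-F x / ε).exp ∂μ ≠ 0 := by
  contrapose! hinf with hzero
  rw [lintegral_eq_zero_iff' (aemeasurable_exp_neg_div hF ε)] at hzero
  have htop : F =ᵐ[μ] fun _ => ⊤ := by
    filter_upwards [hzero] with x hx
    simpa [ereal_exp_div_coe, hε, hε.not_gt] using hx
  rw [essInf_congr_ae htop]
  exact essInf_const_top

lemma lintegral_exp_neg_div_eq_eLpNorm'_rpow {ε : ℝ} (hε : ε ≠ 0) :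
    ∫⁻ x, (-F x / ε).exp ∂μ = eLpNorm' (fun x => (-F x).exp) ε⁻¹ μ ^ ε⁻¹ := by
  simp [eLpNorm'_eq_lintegral_enorm, ereal_exp_div_coe, hε]

theorem tendsto_neg_mul_log_lintegral_exp_neg_div (hF : AEMeasurable F μ) {ε₀ : ℝ} (hε₀ : 0 < ε₀)
    (hfin : ∫⁻ x, (-F x / ε₀).exp ∂μ ≠ ∞) :
    Tendsto (fun ε : ℝ => -(ε * ENNReal.log (∫⁻ x, (-F x / ε).exp ∂μ))) (𝓝[>] 0)
      (𝓝 (essInf F μ)) := by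
  have hexp : AEMeasurable (fun x => ‖(-F x).exp‖ₑ) μ := by
    simp only [enorm_eq_self]
    exact EReal.measurable_exp.comp_aemeasurable hF.neg
  have hfin' : eLpNorm' (fun x => (-F x).exp) ε₀⁻¹ μ ≠ ∞ := by
    rwa [lintegral_exp_neg_div_eq_eLpNorm'_rpow hε₀.ne', Ne,
      ENNReal.rpow_eq_top_iff_of_pos (inv_pos.2 hε₀)] at hfin
  have hlim := (tendsto_eLpNorm'_atTop_eLpNormEssSup hexp (inv_pos.2 hε₀) hfin').comp
    tendsto_inv_nhdsGT_zero
  have hlog := (continuous_neg.tendsto _).comp ((ENNReal.continuous_log.tendsto _).comp hlim)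
  simp only [eLpNormEssSup, enorm_eq_self, essSup_exp_neg_eq_exp_neg_essInf, EReal.log_exp,
    neg_neg] at hlog
  refine hlog.congr' ?_
  filter_upwards [self_mem_nhdsWithin] with ε hε
  have hε₁ : ε ≠ 0 := ne_of_gt hε
  rw [lintegral_exp_neg_div_eq_eLpNorm'_rpow hε₁, ENNReal.log_rpow, ← mul_assoc, ← EReal.coe_mul,
    mul_inv_cancel₀ hε₁, EReal.coe_one, one_mul]
  rfl

end LaplacePrinciple

section ConvexReal

variable {E : Type*} {D : Set E} {g : E → ℝ}

lemma exists_mem_interior_lt_of_convexOn [AddCommGroup E] [Module ℝ E] [TopologicalSpace E]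
    [IsTopologicalAddGroup E] [ContinuousConstSMul ℝ E] (hg : ConvexOn ℝ D g)
    (hD : (interior D).Nonempty) {x : E} (hx : x ∈ D) {c : ℝ} (hc : g x < c) :
    ∃ z ∈ interior D, g z < c := by
  obtain ⟨y, hy⟩ := hD
  have hlim : Tendsto (fun s : ℝ => (1 - s) * g x + s * g y) (𝓝[>] 0) (𝓝 (g x)) := by
    have hcont : Continuous fun s : ℝ => (1 - s) * g x + s * g y := by fun_prop
    simpa using (hcont.tendsto 0).mono_left nhdsWithin_le_nhds
  obtain ⟨s, hs, hs₀, hs₁⟩ :=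
    ((hlim.eventually_lt_const hc).and (Ioc_mem_nhdsGT one_pos)).exists
  have hs₁' : 0 ≤ 1 - s := sub_nonneg.2 hs₁
  refine ⟨(1 - s) • x + s • y,
    hg.1.combo_self_interior_mem_interior hx hy hs₁' hs₀ (by ring), ?_⟩
  exact (hg.2 hx (interior_subset hy) hs₁' hs₀.le (by ring)).trans_lt hs

lemma exists_forall_sub_mul_le_of_convexOn [SeminormedAddCommGroup E] [NormedSpace ℝ E]
    (hg : ConvexOn ℝ D g) {y₀ : E} (hD : D ∈ 𝓝 y₀) (hcont : ContinuousAt g y₀) :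
    ∃ C ≥ 0, ∀ y ∈ D, g y₀ - C * (1 + ‖y - y₀‖) ≤ g y := by
  have hbound : ∀ᶠ z in 𝓝 y₀, z ∈ D ∧ g z < g y₀ + 1 :=
    Filter.Eventually.and hD (hcont.eventually_lt_const (lt_add_one _))
  obtain ⟨r, hr, hball⟩ := Metric.eventually_nhds_iff.1 hbound
  refine ⟨2 / r, by positivity, fun y hy => ?_⟩
  -- Reflect `y` through `y₀`, shrinking by the factor `s` that lands within distance `r` of `y₀`.
  set s : ℝ := r / (2 * (1 + ‖y - y₀‖))
  have hs : 0 < s := by positivity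
  set z : E := y₀ - s • (y - y₀)
  have hz : dist z y₀ < r := by
    have hdist : dist z y₀ = r * (‖y - y₀‖ / (2 * (1 + ‖y - y₀‖))) := by
      rw [dist_eq_norm, sub_sub_cancel_left, norm_neg, norm_smul, Real.norm_of_nonneg hs.le]
      ring
    rw [hdist]
    refine mul_lt_of_lt_one_right hr ((div_lt_one (by positivity)).2 ?_)
    linarith [norm_nonneg (y - y₀)]
  obtain ⟨hzD, hgz⟩ := hball hz
  have hcombo : (s / (1 + s)) • y + (1 / (1 + s)) • z = y₀ := by
    match_scalars <;> field_simp <;> ring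
  have hconv : g y₀ ≤ s / (1 + s) * g y + 1 / (1 + s) * g z := by
    simpa only [hcombo, smul_eq_mul] using
      hg.2 hy hzD (by positivity : 0 ≤ s / (1 + s)) (by positivity : 0 ≤ 1 / (1 + s))
        (by field_simp; ring)
  have hscaled : (1 + s) * g y₀ ≤ s * g y + g z := by
    calc (1 + s) * g y₀ ≤ (1 + s) * (s / (1 + s) * g y + 1 / (1 + s) * g z) := by gcongr
      _ = s * g y + g z := by field_simp
  calc g y₀ - 2 / r * (1 + ‖y - y₀‖) = g y₀ - 1 / s := by
        simp only [s]
        field_simp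
    _ ≤ g y := by
        rw [sub_le_iff_le_add, ← sub_le_iff_le_add', le_div_iff₀ hs]
        linarith

end ConvexReal

section ConvexEReal

variable {E : Type*} {f : E → EReal}

lemma convexOn_toReal_of_forall_le [AddCommGroup E] [Module ℝ E] (hbot : ∀ y, f y ≠ ⊥)
    (hconv : ∀ y₁ y₂ : E, ∀ a b : ℝ, 0 ≤ a → 0 ≤ b → a + b = 1 →
      f (a • y₁ + b • y₂) ≤ (a : EReal) * f y₁ + (b : EReal) * f y₂) :
    ConvexOn ℝ {y | f y ≠ ⊤} fun y => (f y).toReal := by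
  have hreal : ∀ ⦃y₁⦄, f y₁ ≠ ⊤ → ∀ ⦃y₂⦄, f y₂ ≠ ⊤ → ∀ ⦃a b : ℝ⦄, 0 ≤ a → 0 ≤ b → a + b = 1 →
      f (a • y₁ + b • y₂) ≤ ((a * (f y₁).toReal + b * (f y₂).toReal : ℝ) : EReal) := by
    intro y₁ h₁ y₂ h₂ a b ha hb hab
    rw [EReal.coe_add, EReal.coe_mul, EReal.coe_mul, EReal.coe_toReal h₁ (hbot y₁),
      EReal.coe_toReal h₂ (hbot y₂)]
    exact hconv y₁ y₂ a b ha hb hab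
  exact ⟨fun y₁ h₁ y₂ h₂ a b ha hb hab =>
      ((hreal h₁ h₂ ha hb hab).trans_lt (EReal.coe_lt_top _)).ne,
    fun y₁ h₁ y₂ h₂ a b ha hb hab =>
      EReal.toReal_le_toReal (hreal h₁ h₂ ha hb hab) (hbot _) (EReal.coe_ne_top _)⟩

variable [NormedAddCommGroup E] [NormedSpace ℝ E] [FiniteDimensional ℝ E]

lemma continuousOn_interior_of_convexOn_toReal (hbot : ∀ y, f y ≠ ⊥)
    (hf : ConvexOn ℝ {y | f y ≠ ⊤} fun y => (f y).toReal) :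
    ContinuousOn f (interior {y | f y ≠ ⊤}) :=
  (continuous_coe_real_ereal.comp_continuousOn hf.continuousOn_interior).congr fun y hy =>
    (EReal.coe_toReal (interior_subset hy : f y ≠ ⊤) (hbot y)).symm

lemma exists_forall_sub_mul_norm_le_of_convexOn_toReal (hbot : ∀ y, f y ≠ ⊥)
    (hf : ConvexOn ℝ {y | f y ≠ ⊤} fun y => (f y).toReal)
    (hint : (interior {y | f y ≠ ⊤}).Nonempty) (x : E) :
    ∃ A C : ℝ, ∀ y, ((A - C * ‖x - y‖ : ℝ) : EReal) ≤ f y := by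
  obtain ⟨y₀, hy₀⟩ := hint
  obtain ⟨C, hC, hle⟩ := exists_forall_sub_mul_le_of_convexOn hf (mem_interior_iff_mem_nhds.1 hy₀)
    (hf.continuousOn_interior.continuousAt (isOpen_interior.mem_nhds hy₀))
  refine ⟨(f y₀).toReal - C * (1 + ‖x - y₀‖), C, fun y => ?_⟩
  by_cases hy : f y = ⊤
  · simp [hy]
  rw [← EReal.coe_toReal hy (hbot y), EReal.coe_le_coe_iff]
  have htri : ‖y - y₀‖ ≤ ‖x - y₀‖ + ‖x - y‖ := by
    rw [add_comm, norm_sub_rev x y]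
    exact norm_sub_le_norm_sub_add_norm_sub y x y₀
  linarith [hle y hy, mul_le_mul_of_nonneg_left htri hC]

variable [MeasurableSpace E] (μ : Measure E)

theorem essInf_eq_iInf_of_convexOn_toReal [μ.IsOpenPosMeasure] (hbot : ∀ y, f y ≠ ⊥)
    (hf : ConvexOn ℝ {y | f y ≠ ⊤} fun y => (f y).toReal)
    (hint : (interior {y | f y ≠ ⊤}).Nonempty) : essInf f μ = ⨅ y, f y := by
  have hpos : ∀ ⦃y : E⦄ ⦃a : EReal⦄, f y < a → μ {z | f z < a} ≠ 0 := by
    intro y a hya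
    obtain ⟨c, hyc, hca⟩ := EReal.lt_iff_exists_real_btwn.1 hya
    have hy : f y ≠ ⊤ := hya.ne_top
    obtain ⟨z, hz, hzc⟩ := exists_mem_interior_lt_of_convexOn hf hint hy
      (EReal.coe_lt_coe_iff.1 ((EReal.coe_toReal hy (hbot y)).trans_lt hyc))
    have hza : f z < a := by
      rw [← EReal.coe_toReal (interior_subset hz : f z ≠ ⊤) (hbot z)]
      exact (EReal.coe_lt_coe_iff.2 hzc).trans hca
    have hopen := (continuousOn_interior_of_convexOn_toReal hbot hf).isOpen_inter_preimage
      isOpen_interior (isOpen_Iio (a := a))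
    exact ((hopen.measure_pos μ ⟨z, hz, hza⟩).trans_le (measure_mono Set.inter_subset_right)).ne'
  exact (iSup_eq_essSup (β := ERealᵒᵈ) hpos).symm

lemma aemeasurable_of_convexOn_toReal [BorelSpace E] [μ.IsAddHaarMeasure] (hbot : ∀ y, f y ≠ ⊥)
    (hf : ConvexOn ℝ {y | f y ≠ ⊤} fun y => (f y).toReal) : AEMeasurable f μ := by
  classical
  set D := {y | f y ≠ ⊤}
  refine ⟨(interior D).piecewise f fun _ => ⊤,
    (continuousOn_interior_of_convexOn_toReal hbot hf).measurable_piecewise continuousOn_const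
      isOpen_interior.measurableSet, ?_⟩
  filter_upwards [measure_eq_zero_iff_ae_notMem.1 (hf.1.addHaar_frontier μ)] with y hy
  by_cases hyD : y ∈ interior D
  · simp [hyD]
  · have hyD' : y ∉ D := fun h => hy ⟨subset_closure h, hyD⟩
    simpa [hyD, D] using hyD'

end ConvexEReal

section GaussianBound

variable {E : Type*} [NormedAddCommGroup E] [InnerProductSpace ℝ E] [FiniteDimensional ℝ E]
  [MeasurableSpace E] [BorelSpace E]

lemma integrable_exp_neg_mul_norm_sub_sq {b : ℝ} (hb : 0 < b) (x : E) :
    Integrable fun y : E => Real.exp (-b * ‖x - y‖ ^ 2) := by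
  refine Integrable.of_integral_ne_zero (ne_of_gt ?_)
  rw [integral_sub_left_eq_self (fun v : E => Real.exp (-b * ‖v‖ ^ 2)) volume x,
    GaussianFourier.integral_rexp_neg_mul_sq_norm hb]
  positivity

lemma lintegral_exp_neg_div_ne_top_of_mul_norm_sub_sq_le {F : E → EReal} {x : E} {b K : ℝ}
    (hb : 0 < b) (hF : ∀ y, ((b * ‖x - y‖ ^ 2 + K : ℝ) : EReal) ≤ F y) {ε : ℝ} (hε : 0 < ε) :
    ∫⁻ y, (-F y / ε).exp ≠ ∞ := by
  have hgauss := (integrable_exp_neg_mul_norm_sub_sq (div_pos hb hε) x).mul_const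
    (Real.exp (-K / ε))
  refine ((lintegral_mono fun y => ?_).trans_lt hgauss.lintegral_lt_top).ne
  calc (-F y / ε).exp
      ≤ (((-(b * ‖x - y‖ ^ 2 + K) / ε : ℝ)) : EReal).exp := by
        rw [EReal.coe_div, EReal.coe_neg]
        exact EReal.exp_monotone (EReal.div_le_div_right_of_nonneg (EReal.coe_nonneg.2 hε.le)
          (EReal.neg_le_neg_iff.2 (hF y)))
    _ = ENNReal.ofReal (Real.exp (-(b / ε) * ‖x - y‖ ^ 2) * Real.exp (-K / ε)) := by
        rw [EReal.exp_coe, ← Real.exp_add]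
        ring_nf

end GaussianBound

section ProximalObjective

/-- The objective `y ↦ ‖x - y‖² / (2t) + J y` whose infimum is the Moreau envelope of `J` at `x`. -/
noncomputable def proxObjective {E : Type*} [SeminormedAddCommGroup E] (J : E → EReal) (x : E)
    (t : ℝ) (y : E) : EReal :=
  ((‖x - y‖ ^ 2 / (2 * t) : ℝ) : EReal) + J y

variable {E : Type*} {J : E → EReal} {x : E} {t : ℝ}

section Seminormed

variable [SeminormedAddCommGroup E]

lemma proxObjective_ne_bot (hbot : ∀ y, J y ≠ ⊥) (y : E) : proxObjective J x t y ≠ ⊥ := by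
  simp [proxObjective, EReal.add_eq_bot_iff, hbot y]

lemma proxObjective_ne_top_iff (hbot : ∀ y, J y ≠ ⊥) (y : E) :
    proxObjective J x t y ≠ ⊤ ↔ J y ≠ ⊤ := by
  induction h : J y using EReal.rec with
  | bot => exact absurd h (hbot y)
  | coe r => simp [proxObjective, h, ← EReal.coe_add]
  | top => simp [proxObjective, h]

lemma setOf_proxObjective_ne_top (hbot : ∀ y, J y ≠ ⊥) :
    {y | proxObjective J x t y ≠ ⊤} = {y | J y ≠ ⊤} :=
  Set.ext (proxObjective_ne_top_iff hbot)

lemma toReal_proxObjective (hbot : ∀ y, J y ≠ ⊥) {y : E} (hy : J y ≠ ⊤) :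
    (proxObjective J x t y).toReal = ‖x - y‖ ^ 2 / (2 * t) + (J y).toReal :=
  EReal.toReal_add (EReal.coe_ne_top _) (EReal.coe_ne_bot _) hy (hbot y)

lemma convexOn_toReal_proxObjective [NormedSpace ℝ E] (hbot : ∀ y, J y ≠ ⊥)
    (hJ : ConvexOn ℝ {y | J y ≠ ⊤} fun y => (J y).toReal) (ht : 0 ≤ t) :
    ConvexOn ℝ {y | proxObjective J x t y ≠ ⊤} fun y => (proxObjective J x t y).toReal := by
  rw [setOf_proxObjective_ne_top hbot]
  have hquad : ConvexOn ℝ {y | J y ≠ ⊤} fun y => (2 * t)⁻¹ • dist y x ^ 2 :=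
    ((convexOn_dist x hJ.1).pow (fun _ _ => dist_nonneg) 2).smul (by positivity)
  refine (hquad.add hJ).congr fun y hy => ?_
  simp only [Pi.add_apply, smul_eq_mul]
  rw [toReal_proxObjective hbot hy, dist_comm, dist_eq_norm, div_eq_inv_mul]

end Seminormed

lemma exists_forall_mul_norm_sub_sq_le_proxObjective [NormedAddCommGroup E] [NormedSpace ℝ E]
    [FiniteDimensional ℝ E] (hbot : ∀ y, J y ≠ ⊥)
    (hJ : ConvexOn ℝ {y | J y ≠ ⊤} fun y => (J y).toReal)
    (hint : (interior {y | J y ≠ ⊤}).Nonempty) (ht : 0 < t) :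
    ∃ K : ℝ, ∀ y, ((1 / (4 * t) * ‖x - y‖ ^ 2 + K : ℝ) : EReal) ≤ proxObjective J x t y := by
  obtain ⟨A, C, hle⟩ := exists_forall_sub_mul_norm_le_of_convexOn_toReal hbot hJ hint x
  refine ⟨A - C ^ 2 * t, fun y => ?_⟩
  have hsquare : 0 ≤ (‖x - y‖ - 2 * t * C) ^ 2 / (4 * t) := by positivity
  have hcomplete : (‖x - y‖ - 2 * t * C) ^ 2 / (4 * t) =
      ‖x - y‖ ^ 2 / (2 * t) - 1 / (4 * t) * ‖x - y‖ ^ 2 - C * ‖x - y‖ + C ^ 2 * t := by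
    field_simp
    ring
  calc ((1 / (4 * t) * ‖x - y‖ ^ 2 + (A - C ^ 2 * t) : ℝ) : EReal)
      ≤ ((‖x - y‖ ^ 2 / (2 * t) + (A - C * ‖x - y‖) : ℝ) : EReal) :=
        EReal.coe_le_coe_iff.2 (by linarith)
    _ ≤ proxObjective J x t y := by
        rw [EReal.coe_add]
        exact add_le_add_right (hle y) _

end ProximalObjective

section ViscousSolution

variable {n : ℕ} {J : EuclideanSpace ℝ (Fin n) → EReal} {x : EuclideanSpace ℝ (Fin n)} {t ε : ℝ}

lemma heatIntegrand_eq_toReal_exp (hbot : ∀ y, J y ≠ ⊥) (hε : 0 < ε)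
    (y : EuclideanSpace ℝ (Fin n)) :
    heatIntegrand n J x t ε y = (-proxObjective J x t y / ε).exp.toReal := by
  by_cases hy : J y = ⊤
  · simp [heatIntegrand, proxObjective, hy, EReal.bot_div_of_pos_ne_top, hε]
  · have hF : proxObjective J x t y = ((‖x - y‖ ^ 2 / (2 * t) + (J y).toReal : ℝ) : EReal) := by
      rw [← toReal_proxObjective hbot hy, EReal.coe_toReal
        ((proxObjective_ne_top_iff hbot y).2 hy) (proxObjective_ne_bot hbot y)]
    rw [heatIntegrand, if_neg hy, hF, ← EReal.coe_neg, ← EReal.coe_div, EReal.exp_coe,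
      ENNReal.toReal_ofReal (Real.exp_nonneg _), neg_div]

lemma integral_heatIntegrand_eq_toReal_lintegral (hbot : ∀ y, J y ≠ ⊥)
    (hF : AEMeasurable (proxObjective J x t)) (hε : 0 < ε)
    (hfin : ∫⁻ y, (-proxObjective J x t y / ε).exp ≠ ∞) :
    ∫ y, heatIntegrand n J x t ε y = (∫⁻ y, (-proxObjective J x t y / ε).exp).toReal := by
  have hmeas := aemeasurable_exp_neg_div hF ε
  simp_rw [heatIntegrand_eq_toReal_exp hbot hε]
  exact integral_toReal hmeas (ae_lt_top' hmeas hfin)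

lemma coe_viscSol_eq (ht : 0 < t) (hε : 0 < ε) {I : ℝ≥0∞}
    (hI : ∫ y, heatIntegrand n J x t ε y = I.toReal) (hI₀ : I ≠ 0) (hI_top : I ≠ ∞) :
    (viscSol n J x t ε : EReal) =
      ((n / 2 * (ε * Real.log (2 * Real.pi * t * ε)) : ℝ) : EReal) + -(ε * ENNReal.log I) := by
  have hI_pos : 0 < I.toReal := ENNReal.toReal_pos hI₀ hI_top
  rw [ENNReal.log_pos_real hI₀ hI_top, ← EReal.coe_mul, ← EReal.coe_neg, ← EReal.coe_add, viscSol,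
    hI, Real.log_mul (by positivity) hI_pos.ne', Real.log_rpow (by positivity)]
  ring_nf

lemma tendsto_mul_log_const_mul_nhdsGT_zero {c : ℝ} (hc : c ≠ 0) :
    Tendsto (fun ε : ℝ => ε * Real.log (c * ε)) (𝓝[>] 0) (𝓝 0) := by
  have hcont : Continuous fun ε : ℝ => c⁻¹ * ((c * ε) * Real.log (c * ε)) :=
    continuous_const.mul (Real.continuous_mul_log.comp (continuous_const_mul c))
  have hlim := (hcont.tendsto 0).mono_left (nhdsWithin_le_nhds (s := Set.Ioi 0))
  simpa [mul_assoc, hc] using hlim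

theorem tendsto_viscSol_essInf_proxObjective (hbot : ∀ y, J y ≠ ⊥) (ht : 0 < t)
    (hF : AEMeasurable (proxObjective J x t)) (hinf : essInf (proxObjective J x t) volume ≠ ⊤)
    (hfin : ∀ ε : ℝ, 0 < ε → ∫⁻ y, (-proxObjective J x t y / ε).exp ≠ ∞) :
    Tendsto (fun ε => (viscSol n J x t ε : EReal)) (𝓝[>] 0)
      (𝓝 (essInf (proxObjective J x t) volume)) := by
  have hlaplace := tendsto_neg_mul_log_lintegral_exp_neg_div hF one_pos (hfin 1 one_pos)
  have hprefactor : Tendsto (fun ε : ℝ =>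
      ((n / 2 * (ε * Real.log (2 * Real.pi * t * ε)) : ℝ) : EReal)) (𝓝[>] 0) (𝓝 0) := by
    have hlog := tendsto_mul_log_const_mul_nhdsGT_zero (c := 2 * Real.pi * t) (by positivity)
    simpa only [mul_zero, EReal.coe_zero, Function.comp_def] using
      (continuous_coe_real_ereal.tendsto _).comp (hlog.const_mul (n / 2 : ℝ))
  have hsum := (EReal.continuousAt_add (.inl EReal.zero_ne_top)
    (.inl EReal.zero_ne_bot)).tendsto.comp (hprefactor.prodMk_nhds hlaplace)
  rw [zero_add] at hsum
  refine hsum.congr' ?_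
  filter_upwards [self_mem_nhdsWithin] with ε hε
  exact (coe_viscSol_eq ht hε (integral_heatIntegrand_eq_toReal_lintegral hbot hF hε (hfin ε hε))
    (lintegral_exp_neg_div_ne_zero hF hε hinf) (hfin ε hε)).symm

end ViscousSolution

theorem viscSol_tendsto_moreau_envelope_general (n : ℕ)
    (J : EuclideanSpace ℝ (Fin n) → EReal)
    (hJ_proper_bot : ∀ y, J y ≠ ⊥)
    (hJ_convex : ∀ y₁ y₂ : EuclideanSpace ℝ (Fin n), ∀ a b : ℝ, 0 ≤ a → 0 ≤ b → a + b = 1 →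
      J (a • y₁ + b • y₂) ≤ (a : EReal) * J y₁ + (b : EReal) * J y₂)
    (hJ_int : (interior {y : EuclideanSpace ℝ (Fin n) | J y ≠ ⊤}).Nonempty)
    (x : EuclideanSpace ℝ (Fin n)) (t : ℝ) (ht : 0 < t) :
    Tendsto (fun ε : ℝ => ((viscSol n J x t ε : ℝ) : EReal)) (𝓝[>] (0 : ℝ))
      (𝓝 (⨅ y : EuclideanSpace ℝ (Fin n),
        (((‖x - y‖ ^ 2 / (2 * t) : ℝ)) : EReal) + J y)) := by
  have hJ := convexOn_toReal_of_forall_le hJ_proper_bot hJ_convex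
  have hF := convexOn_toReal_proxObjective (x := x) hJ_proper_bot hJ ht.le
  have hmeas := aemeasurable_of_convexOn_toReal volume (proxObjective_ne_bot hJ_proper_bot) hF
  have hinf : essInf (proxObjective J x t) volume = ⨅ y, proxObjective J x t y :=
    essInf_eq_iInf_of_convexOn_toReal volume (proxObjective_ne_bot hJ_proper_bot) hF
      (by rwa [setOf_proxObjective_ne_top hJ_proper_bot])
  have hinf_top : essInf (proxObjective J x t) volume ≠ ⊤ := by
    obtain ⟨y, hy⟩ := hJ_int
    rw [hinf]
    exact ne_top_of_le_ne_top
      ((proxObjective_ne_top_iff hJ_proper_bot y).2 (interior_subset hy)) (iInf_le _ y)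
  obtain ⟨K, hK⟩ :=
    exists_forall_mul_norm_sub_sq_le_proxObjective (x := x) hJ_proper_bot hJ hJ_int ht
  have hfin : ∀ ε : ℝ, 0 < ε → ∫⁻ y, (-proxObjective J x t y / ε).exp ≠ ∞ := fun ε hε =>
    lintegral_exp_neg_div_ne_top_of_mul_norm_sub_sq_le (by positivity) hK hε
  exact hinf ▸ tendsto_viscSol_essInf_proxObjective hJ_proper_bot ht hmeas hinf_top hfin

/-- **Laplace principle / vanishing viscosity limit.** For every `x ∈ ℝⁿ` and `t > 0`,
`S_ε(x,t) → S₀(x,t) = inf_y { ‖x−y‖²/(2t) + J(y) }` as `ε → 0⁺`. -/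
theorem viscSol_tendsto_moreau_envelope (n : ℕ) (hn : 1 ≤ n)
    (J : EuclideanSpace ℝ (Fin n) → EReal)
    (hJ_proper_bot : ∀ y, J y ≠ ⊥)
    (hJ_lsc : LowerSemicontinuous J)
    (hJ_convex : ∀ y₁ y₂ : EuclideanSpace ℝ (Fin n), ∀ a b : ℝ, 0 ≤ a → 0 ≤ b → a + b = 1 →
      J (a • y₁ + b • y₂) ≤ (a : EReal) * J y₁ + (b : EReal) * J y₂)
    (hJ_int : (interior {y : EuclideanSpace ℝ (Fin n) | J y ≠ ⊤}).Nonempty)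
    (hJ_inf : (⨅ y : EuclideanSpace ℝ (Fin n), J y) = (0 : EReal))
    (x : EuclideanSpace ℝ (Fin n)) (t : ℝ) (ht : 0 < t) :
    Tendsto (fun ε : ℝ => ((viscSol n J x t ε : ℝ) : EReal)) (𝓝[>] (0 : ℝ))
      (𝓝 (⨅ y : EuclideanSpace ℝ (Fin n),
        (((‖x - y‖ ^ 2 / (2 * t) : ℝ)) : EReal) + J y)) := by
  exact viscSol_tendsto_moreau_envelope_general n J hJ_proper_bot hJ_convex hJ_int x t ht
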